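/- Let F(u) = 1/π − (1−u)·cot(π(1−u)) for real u ∈ (0,1). (a) If T ≥ t₀ ≥ 2π, then (2π/T)·∫_{t₀}^{T} √(F(t/T)^2 + (1 − t/T)^2) · log(t/(2π)) dt ≤ (log(T/(2π)))^2 − (log(t₀/(2π)))^2. (b) If moreover t₀ ≥ 2πe and T ≥ 3t₀, then (2π/T)·∫_{t₀}^{T} √(F(t/T)^2 + (1 − t/T)^2) · log(t/(2π)) dt ≤ (log(T/(2π)))^2 − (log(t₀/(2π)))^2 − 2·C₁·log(eT/(2π)) + 2·C₂, where for k = 1, 2, C_k = ∑_{n ≥ 1} ζ(2n)·(1/(2n)^k − 2/(2n+1)^k + 1/(2n+2)^k). -/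

import Mathlib

open Real MeasureTheory

/-- `F(u) = 1/π − (1−u)·cot(π(1−u))`. -/
noncomputable def Fcot (u : ℝ) : ℝ := 1 / π - (1 - u) * Real.cot (π * (1 - u))

/-- `C_k = ∑_{n ≥ 1} ζ(2n)·(1/(2n)^k − 2/(2n+1)^k + 1/(2n+2)^k)`. -/
noncomputable def Cconst (k : ℕ) : ℝ :=
  ∑' n : ℕ, (riemannZeta (2 * ((n : ℂ) + 1))).re *
    (1 / (2 * ((n : ℝ) + 1)) ^ k - 2 / (2 * ((n : ℝ) + 1) + 1) ^ k
      + 1 / (2 * ((n : ℝ) + 1) + 2) ^ k)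

/-!
In the partial fraction expansion of `πu cot(πu)`, keep the first term and estimate the others by
`ζ(2)`. This gives `π √(F(u)² + (1 - u)²) ≤ 1 / u + r(u)` on `(0, 1)`, where `r` is the quadratic
polynomial `(2 - 5u)(1 + u) / 6`. At `u = t / T` the term `1 / u` contributes exactly
`log²(T / 2π) - log²(t₀ / 2π)`, so the theorem is a matter of bounding
`∫ r(t / T) log(t / 2π) dt` from above.

For (a), `r` changes sign only once, from positive to negative, and its integral over `[t₀ / T, 1]`
is not positive; since the logarithm is nonnegative and increasing, the weighted integral is not
positive either. For (b), integration by parts evaluates the integral, whose leading term is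
`-7/36 · T log(T / 2π)` with `-7/36 = ∫₀¹ r`, and the bounds `C₁ ≤ 7/36` and `C₂ ≥ 7/48` suffice.
-/

section Cotangent

lemma cot_pi_sub (x : ℝ) : Real.cot (π - x) = -Real.cot x := by
  rw [Real.cot_eq_cos_div_sin, Real.cot_eq_cos_div_sin, cos_pi_sub, sin_pi_sub, neg_div]

lemma ofReal_mem_integerComplement {x : ℝ} (hx₀ : x ≠ 0) (hx₁ : |x| < 1) :
    (x : ℂ) ∈ Complex.integerComplement := by
  rintro ⟨n, hn⟩
  obtain rfl : (n : ℝ) = x := by exact_mod_cast hn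
  have hn_abs : |n| < 1 := by exact_mod_cast hx₁
  exact hx₀ (by rw [Int.abs_lt_one_iff.mp hn_abs, Int.cast_zero])

lemma hasSum_one_sub_pi_mul_mul_cot {x : ℝ} (hx : (x : ℂ) ∈ Complex.integerComplement) :
    HasSum (fun n : ℕ ↦ 2 * x ^ 2 / (((n : ℝ) + 1) ^ 2 - x ^ 2))
      (1 - π * x * Real.cot (π * x)) := by
  have hx₀ : (x : ℂ) ≠ 0 := Complex.integerComplement.ne_zero hx
  have hsum : HasSum (fun n ↦ cotTerm x n) (π * Complex.cot (π * x) - 1 / x) := by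
    rw [cot_series_rep' hx]
    exact (summable_cotTerm hx).hasSum
  have hvalue : ((1 - π * x * Real.cot (π * x) : ℝ) : ℂ)
      = -x * (π * Complex.cot (π * x) - 1 / x) := by
    push_cast
    field_simp
    ring
  rw [← Complex.hasSum_ofReal, hvalue]
  refine (hsum.mul_left (-(x : ℂ))).congr_fun fun n ↦ ?_
  have hn : ((n : ℂ) + 1) ^ 2 - x ^ 2 ≠ 0 := by
    refine sub_ne_zero.mpr fun h ↦
      Complex.integerComplement_pow_two_ne_pow_two hx (n + 1) ?_
    exact_mod_cast h.symm
  have hfactor : (x + (n + 1)) * (x - (n + 1)) = -(((n : ℂ) + 1) ^ 2 - x ^ 2) := by ring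
  rw [cotTerm_identity hx, hfactor]
  push_cast
  field_simp

/- Keep the first term of the partial fraction series and replace `(n + 1)² - x²` by `(n + 1)²`
in the others. -/
lemma le_one_sub_pi_mul_mul_cot {x : ℝ} (hx₀ : x ≠ 0) (hx₁ : |x| < 1) :
    2 * x ^ 2 / (1 - x ^ 2) + (π ^ 2 / 3 - 2) * x ^ 2 ≤ 1 - π * x * Real.cot (π * x) := by
  have hsq : x ^ 2 < 1 := (sq_lt_one_iff_abs_lt_one x).mpr hx₁
  have hcot := hasSum_one_sub_pi_mul_mul_cot (ofReal_mem_integerComplement hx₀ hx₁)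
  have htail := hasSum_le (fun n : ℕ ↦ ?_)
    (((hasSum_nat_add_iff' 2).mpr hasSum_zeta_two).mul_left (2 * x ^ 2))
    ((hasSum_nat_add_iff' 1).mpr hcot)
  · norm_num [Finset.sum_range_succ] at htail
    linarith
  · have : (0 : ℝ) ≤ n := n.cast_nonneg
    push_cast
    rw [mul_one_div]
    gcongr
    · nlinarith
    · nlinarith

end Cotangent

section Kernel

/-- The modulus `|F(u) + i(1 - u)|`, which weights the logarithm in the integral. -/
noncomputable def kernelNorm (u : ℝ) : ℝ := √(Fcot u ^ 2 + (1 - u) ^ 2)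

/-- The polynomial by which `π * kernelNorm u` may exceed `1 / u`; see `pi_mul_kernelNorm_le`. -/
noncomputable def excess (u : ℝ) : ℝ := (2 - 5 * u) * (1 + u) / 6

variable {u : ℝ}

lemma pi_mul_Fcot (u : ℝ) : π * Fcot u = 1 - π * (1 - u) * Real.cot (π * (1 - u)) := by
  unfold Fcot
  field_simp

lemma pi_mul_mul_Fcot (u : ℝ) :
    π * u * Fcot u = 1 - (1 - u) * (1 - π * u * Real.cot (π * u)) := by
  have hcot : Real.cot (π * (1 - u)) = -Real.cot (π * u) := by
    rw [mul_sub, mul_one, cot_pi_sub]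
  rw [mul_right_comm, pi_mul_Fcot, hcot]
  ring

lemma pi_sq_bounds : 69 / 7 < π ^ 2 ∧ π ^ 2 < 79 / 8 := by
  constructor <;> nlinarith [pi_gt_d2, pi_lt_d4]

lemma Fcot_nonneg (hu₀ : 0 < u) (hu₁ : u < 1) : 0 ≤ Fcot u := by
  have hsq : 0 < 1 - (1 - u) ^ 2 := by nlinarith
  have hcoef : 0 ≤ π ^ 2 / 3 - 2 := by linarith [pi_sq_bounds.1]
  have hcot := le_one_sub_pi_mul_mul_cot (x := 1 - u) (by linarith)
    (by rw [abs_lt]; constructor <;> linarith)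
  refine nonneg_of_mul_nonneg_right ?_ pi_pos
  rw [pi_mul_Fcot]
  exact le_trans (by positivity) hcot

lemma pi_mul_mul_Fcot_le (hu₀ : 0 < u) (hu₁ : u < 1) :
    π * u * Fcot u ≤ (1 - u) * (1 + u / (1 + u) - 9 / 7 * u ^ 2) := by
  have hcot := le_one_sub_pi_mul_mul_cot hu₀.ne' (by rwa [abs_of_pos hu₀])
  have hcoef : 9 / 7 * u ^ 2 ≤ (π ^ 2 / 3 - 2) * u ^ 2 := by
    gcongr
    linarith [pi_sq_bounds.1]
  have h₁ : 1 - u ≠ 0 := by linarith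
  have h₂ : 1 + u ≠ 0 := by linarith
  calc π * u * Fcot u = 1 - (1 - u) * (1 - π * u * Real.cot (π * u)) := pi_mul_mul_Fcot u
    _ ≤ 1 - (1 - u) * (2 * u ^ 2 / (1 - u ^ 2) + 9 / 7 * u ^ 2) := by
      gcongr
      linarith
    _ = (1 - u) * (1 + u / (1 + u) - 9 / 7 * u ^ 2) := by
      rw [show 1 - u ^ 2 = (1 - u) * (1 + u) by ring]
      field_simp
      ring

lemma quintic_nonneg (hu₀ : 0 ≤ u) (hu₁ : u ≤ 1) :
    0 ≤ 2 / 3 - 769 / 504 * u - 65 / 252 * u ^ 2 + 2585 / 1176 * u ^ 3 + 269 / 882 * u ^ 4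
      - 1691 / 1764 * u ^ 5 := by
  have hpow : u ^ 5 ≤ u ^ 4 := pow_le_pow_of_le_one hu₀ hu₁ (by norm_num)
  have hsq := sq_nonneg (u - 3 / 5)
  have hu₁' := sub_nonneg.mpr hu₁
  nlinarith [mul_nonneg hu₀ hsq, mul_nonneg (mul_nonneg hu₀ hu₁') hsq, mul_nonneg hu₁' hsq]

lemma sq_add_pi_sq_mul_sq_le (hu₀ : 0 ≤ u) (hu₁ : u ≤ 1) :
    (1 + u / (1 + u) - 9 / 7 * u ^ 2) ^ 2 + π ^ 2 * u ^ 2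
      ≤ (1 + 4 / 3 * u + 5 / 6 * u ^ 2) ^ 2 := by
  have hpi : π ^ 2 * u ^ 2 ≤ 79 / 8 * u ^ 2 := by
    gcongr
    exact pi_sq_bounds.2.le
  refine (add_le_add_right hpi _).trans (sub_nonneg.mp ?_)
  have hquot : (1 + 4 / 3 * u + 5 / 6 * u ^ 2) ^ 2
      - ((1 + u / (1 + u) - 9 / 7 * u ^ 2) ^ 2 + 79 / 8 * u ^ 2)
      = u * (2 / 3 - 769 / 504 * u - 65 / 252 * u ^ 2 + 2585 / 1176 * u ^ 3 + 269 / 882 * u ^ 4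
        - 1691 / 1764 * u ^ 5) / (1 + u) ^ 2 := by
    field_simp
    ring
  rw [hquot]
  have := quintic_nonneg hu₀ hu₁
  positivity

lemma pi_mul_kernelNorm_le (hu₀ : 0 < u) (hu₁ : u < 1) :
    π * kernelNorm u ≤ 1 / u + excess u := by
  have : 0 ≤ 1 - u := by linarith
  have hF : 0 ≤ π * u * Fcot u := mul_nonneg (by positivity) (Fcot_nonneg hu₀ hu₁)
  have hroot : π * u * kernelNorm u ≤ (1 - u) * (1 + 4 / 3 * u + 5 / 6 * u ^ 2) := by
    refine abs_le_of_sq_le_sq' ?_ (by positivity) |>.2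
    calc (π * u * kernelNorm u) ^ 2
        = (π * u * Fcot u) ^ 2 + (1 - u) ^ 2 * (π ^ 2 * u ^ 2) := by
          rw [mul_pow, kernelNorm, sq_sqrt (by positivity)]
          ring
      _ ≤ ((1 - u) * (1 + u / (1 + u) - 9 / 7 * u ^ 2)) ^ 2 + (1 - u) ^ 2 * (π ^ 2 * u ^ 2) := by
          gcongr ?_ + _
          exact pow_le_pow_left₀ hF (pi_mul_mul_Fcot_le hu₀ hu₁) 2
      _ = (1 - u) ^ 2 * ((1 + u / (1 + u) - 9 / 7 * u ^ 2) ^ 2 + π ^ 2 * u ^ 2) := by ring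
      _ ≤ (1 - u) ^ 2 * (1 + 4 / 3 * u + 5 / 6 * u ^ 2) ^ 2 := by
          gcongr
          exact sq_add_pi_sq_mul_sq_le hu₀.le hu₁.le
      _ = ((1 - u) * (1 + 4 / 3 * u + 5 / 6 * u ^ 2)) ^ 2 := by ring
  calc π * kernelNorm u = π * u * kernelNorm u / u := by field_simp
    _ ≤ (1 - u) * (1 + 4 / 3 * u + 5 / 6 * u ^ 2) / u := by gcongr
    _ = 1 / u + excess u := by
      unfold excess
      field_simp
      ring

end Kernel

section Constants

lemma riemannZeta_natCast_re_mem_Icc {k : ℕ} (hk : 2 ≤ k) :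
    (riemannZeta k).re ∈ Set.Icc 0 (π ^ 2 / 6) := by
  have hzeta : (riemannZeta k).re = ∑' m : ℕ, 1 / (m : ℝ) ^ k := by
    rw [zeta_nat_eq_tsum_of_gt_one hk, ← Complex.ofReal_re (∑' m : ℕ, 1 / (m : ℝ) ^ k)]
    push_cast
    rfl
  rw [hzeta, ← hasSum_zeta_two.tsum_eq]
  refine ⟨tsum_nonneg fun m ↦ by positivity, Summable.tsum_le_tsum (fun m ↦ ?_)
    (summable_one_div_nat_pow.mpr hk) hasSum_zeta_two.summable⟩
  rcases m.eq_zero_or_pos with rfl | hm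
  · simp [show k ≠ 0 by lia]
  · have hm' : (1 : ℝ) ≤ m := by exact_mod_cast hm
    gcongr

/-- The second difference `y⁻ᵏ - 2 (y + 1)⁻ᵏ + (y + 2)⁻ᵏ`, whose values at `y = 2n` are the
coefficients in the series for `C_k`. -/
noncomputable def invPowSecondDiff (k : ℕ) (y : ℝ) : ℝ :=
  1 / y ^ k - 2 / (y + 1) ^ k + 1 / (y + 2) ^ k

lemma invPowSecondDiff_nonneg (k : ℕ) {y : ℝ} (hy : 0 < y) : 0 ≤ invPowSecondDiff k y := by
  have hy₂ : y + 2 ∈ Set.Ioi 0 := Set.mem_Ioi.mpr (by positivity)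
  have hconvex : ConvexOn ℝ (Set.Ioi 0) fun z : ℝ ↦ z ^ (-(k : ℤ)) := convexOn_zpow _
  have hmid := hconvex.2 hy hy₂ (show (0 : ℝ) ≤ 1 / 2 by norm_num)
    (show (0 : ℝ) ≤ 1 / 2 by norm_num) (by norm_num)
  have hmidpoint : 1 / 2 * y + 1 / 2 * (y + 2) = y + 1 := by ring
  simp only [smul_eq_mul, hmidpoint, zpow_neg, zpow_natCast] at hmid
  simp only [invPowSecondDiff, div_eq_mul_inv]
  linarith

lemma invPowSecondDiff_le_sub (k : ℕ) {y : ℝ} (hy : 0 < y) :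
    invPowSecondDiff k y ≤ 1 / y ^ k - 1 / (y + 2) ^ k := by
  have hanti : 2 * (1 / (y + 2) ^ k) ≤ 2 * (1 / (y + 1) ^ k) := by
    gcongr
    norm_num
  unfold invPowSecondDiff
  linarith [mul_one_div 2 ((y + 1) ^ k)]

/- The right-hand side telescopes along `y = 2, 4, 6, …`. The shift `1 / 2` makes the resulting
bound sharp enough: without it `C₁ ≤ 7 / 36` would be out of reach. -/
lemma invPowSecondDiff_one_le_sub {y : ℝ} (hy : 2 ≤ y) :
    invPowSecondDiff 1 y ≤ 1 / (2 * y ^ 2 + 1 / 2) - 1 / (2 * (y + 2) ^ 2 + 1 / 2) := by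
  have : 0 < y := by linarith
  rw [← sub_nonneg]
  have hdiff : 1 / (2 * y ^ 2 + 1 / 2) - 1 / (2 * (y + 2) ^ 2 + 1 / 2) - invPowSecondDiff 1 y
      = 2 * (8 * (y + 1) ^ 2 - 25) /
        (y * (y + 1) * (y + 2) * (4 * y ^ 2 + 1) * (4 * (y + 2) ^ 2 + 1)) := by
    unfold invPowSecondDiff
    field_simp
    ring
  rw [hdiff]
  have : 0 ≤ 8 * (y + 1) ^ 2 - 25 := by nlinarith
  positivity

lemma sum_range_mul_le_of_le_sub_succ {w d g : ℕ → ℝ} {W : ℝ} (hw : ∀ n, w n ∈ Set.Icc 0 W)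
    (hd : ∀ n, 0 ≤ d n) (hdg : ∀ n, d n ≤ g n - g (n + 1)) (hg : ∀ n, 0 ≤ g n) (N : ℕ) :
    ∑ n ∈ Finset.range N, w n * d n ≤ W * g 0 := by
  have hW : 0 ≤ W := (hw 0).1.trans (hw 0).2
  calc ∑ n ∈ Finset.range N, w n * d n
      ≤ ∑ n ∈ Finset.range N, W * (g n - g (n + 1)) := by
        gcongr with n
        · exact hd n
        · exact (hw n).2
        · exact hdg n
    _ = W * (g 0 - g N) := by rw [← Finset.mul_sum, Finset.sum_range_sub']
    _ ≤ W * g 0 := by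
        gcongr
        linarith [hg N]

/-- The `n`-th term of the series for `C_k`, which the paper indexes by `n + 1`. -/
noncomputable def cconstTerm (k n : ℕ) : ℝ :=
  (riemannZeta ((2 * (n + 1) : ℕ) : ℂ)).re * invPowSecondDiff k (2 * ((n : ℝ) + 1))

lemma Cconst_eq_tsum (k : ℕ) : Cconst k = ∑' n, cconstTerm k n := by
  unfold Cconst cconstTerm invPowSecondDiff
  push_cast
  rfl

lemma cconstTerm_nonneg (k n : ℕ) : 0 ≤ cconstTerm k n :=
  mul_nonneg (riemannZeta_natCast_re_mem_Icc (by lia)).1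
    (invPowSecondDiff_nonneg k (by positivity))

lemma sum_range_cconstTerm_le {k : ℕ} {g : ℝ → ℝ} (hg : ∀ y, 2 ≤ y → 0 ≤ g y)
    (hdg : ∀ y, 2 ≤ y → invPowSecondDiff k y ≤ g y - g (y + 2)) (N : ℕ) :
    ∑ n ∈ Finset.range N, cconstTerm k n ≤ π ^ 2 / 6 * g 2 := by
  have hy (n : ℕ) : 2 ≤ 2 * ((n : ℝ) + 1) := by linarith [n.cast_nonneg (α := ℝ)]
  have hsum := sum_range_mul_le_of_le_sub_succ (W := π ^ 2 / 6)
    (w := fun n ↦ (riemannZeta ((2 * (n + 1) : ℕ) : ℂ)).re)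
    (d := fun n ↦ invPowSecondDiff k (2 * ((n : ℝ) + 1))) (g := fun n ↦ g (2 * ((n : ℝ) + 1)))
    (fun n ↦ riemannZeta_natCast_re_mem_Icc (by lia))
    (fun n ↦ invPowSecondDiff_nonneg k (by positivity)) (fun n ↦ ?_)
    (fun n ↦ hg _ (hy n)) N
  · simpa [cconstTerm] using hsum
  · convert hdg _ (hy n) using 3
    push_cast
    ring

lemma Cconst_one_le : Cconst 1 ≤ 7 / 36 := by
  rw [Cconst_eq_tsum]
  calc ∑' n, cconstTerm 1 n ≤ π ^ 2 / 6 * (1 / (2 * 2 ^ 2 + 1 / 2)) :=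
        Real.tsum_le_of_sum_range_le (cconstTerm_nonneg 1)
          (sum_range_cconstTerm_le (g := fun y ↦ 1 / (2 * y ^ 2 + 1 / 2))
            (fun y _ ↦ by positivity) fun _ ↦ invPowSecondDiff_one_le_sub)
    _ ≤ 7 / 36 := by linarith [pi_sq_bounds.2]

lemma summable_cconstTerm (k : ℕ) : Summable (cconstTerm k) := by
  refine summable_of_sum_range_le (cconstTerm_nonneg k) (sum_range_cconstTerm_le
    (g := fun y ↦ 1 / y ^ k) (fun y hy ↦ ?_) fun y hy ↦ invPowSecondDiff_le_sub k (by linarith))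
  have : 0 < y := by linarith
  positivity

lemma le_Cconst (k : ℕ) : π ^ 2 / 6 * invPowSecondDiff k 2 ≤ Cconst k := by
  have hzero : cconstTerm k 0 = π ^ 2 / 6 * invPowSecondDiff k 2 := by
    have hzeta : (riemannZeta 2).re = π ^ 2 / 6 := by
      rw [riemannZeta_two, ← Complex.ofReal_re (π ^ 2 / 6)]
      push_cast
      rfl
    simp [cconstTerm, hzeta]
  rw [Cconst_eq_tsum, ← hzero]
  exact (summable_cconstTerm k).le_tsum 0 fun n _ ↦ cconstTerm_nonneg k n

lemma le_Cconst_two : 7 / 48 ≤ Cconst 2 := by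
  refine le_trans ?_ (le_Cconst 2)
  norm_num [invPowSecondDiff]
  linarith [pi_sq_bounds.1]

end Constants

section Integrals

/-- The primitive of `excess` vanishing at `0`. -/
noncomputable def excessPrimitive (u : ℝ) : ℝ := u / 3 - u ^ 2 / 4 - 5 / 18 * u ^ 3

/-- The primitive of `excessPrimitive u / u` vanishing at `0`, which appears when `excess` is
integrated by parts against a logarithm. -/
noncomputable def excessLogPrimitive (u : ℝ) : ℝ := u / 3 - u ^ 2 / 8 - 5 / 54 * u ^ 3

lemma hasDerivAt_excessPrimitive (u : ℝ) : HasDerivAt excessPrimitive (excess u) u := by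
  have hderiv := (((hasDerivAt_id' u).div_const 3).sub
    (((hasDerivAt_id' u).fun_pow 2).div_const 4)).sub
      (((hasDerivAt_id' u).fun_pow 3).const_mul (5 / 18))
  refine hderiv.congr_deriv ?_
  unfold excess
  norm_num
  ring

lemma hasDerivAt_excessLogPrimitive {u : ℝ} (hu : u ≠ 0) :
    HasDerivAt excessLogPrimitive (excessPrimitive u / u) u := by
  have hderiv := (((hasDerivAt_id' u).div_const 3).sub
    (((hasDerivAt_id' u).fun_pow 2).div_const 8)).sub
      (((hasDerivAt_id' u).fun_pow 3).const_mul (5 / 54))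
  refine hderiv.congr_deriv ?_
  unfold excessPrimitive
  norm_num
  field_simp
  ring

lemma excess_nonneg {u : ℝ} (hu₀ : 0 ≤ u) (hu₁ : u ≤ 2 / 5) : 0 ≤ excess u := by
  have : 0 ≤ 2 - 5 * u := by linarith
  unfold excess
  positivity

lemma excess_nonpos {u : ℝ} (hu : 2 / 5 ≤ u) : excess u ≤ 0 :=
  div_nonpos_of_nonpos_of_nonneg
    (mul_nonpos_of_nonpos_of_nonneg (by linarith) (by linarith)) (by norm_num)

lemma continuous_excess : Continuous excess := by
  unfold excess
  fun_prop

lemma excessPrimitive_one_le {u : ℝ} (hu₀ : 0 ≤ u) (hu₁ : u ≤ 1) :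
    excessPrimitive 1 ≤ excessPrimitive u := by
  rw [← sub_nonneg]
  have hfactor : excessPrimitive u - excessPrimitive 1
      = (1 - u) * (7 + 19 * u + 10 * u ^ 2) / 36 := by
    unfold excessPrimitive
    ring
  rw [hfactor]
  have := sub_nonneg.mpr hu₁
  positivity

lemma excessPrimitive_nonneg {u : ℝ} (hu₀ : 0 ≤ u) (hu₁ : u ≤ 3 / 5) : 0 ≤ excessPrimitive u := by
  have hfactor : excessPrimitive u = u * (1 / 3 - u / 4 - 5 / 18 * u ^ 2) := by
    unfold excessPrimitive
    ring
  rw [hfactor]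
  exact mul_nonneg hu₀ (by nlinarith)

lemma excessLogPrimitive_sub_excessPrimitive_le {u : ℝ} (hu₀ : 0 ≤ u) (hu₁ : u ≤ 1 / 3) :
    excessLogPrimitive u - excessPrimitive u ≤ 1 / 48 := by
  have hsq : u ^ 2 ≤ (1 / 3) ^ 2 := by gcongr
  have hcube : u ^ 3 ≤ (1 / 3) ^ 3 := by gcongr
  unfold excessLogPrimitive excessPrimitive
  linarith

lemma hasDerivAt_log_div {c t : ℝ} (hc : c ≠ 0) (ht : t ≠ 0) :
    HasDerivAt (fun s ↦ log (s / c)) (1 / t) t := by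
  refine (((hasDerivAt_id' t).div_const c).log (div_ne_zero ht hc)).congr_deriv ?_
  field_simp

variable {c t₀ T : ℝ}

lemma pos_of_mem_uIcc {a b t : ℝ} (ha : 0 < a) (hb : 0 < b) (ht : t ∈ Set.uIcc a b) : 0 < t :=
  (lt_min ha hb).trans_le ht.1

lemma continuousOn_log_div (hc : c ≠ 0) (ht₀ : 0 < t₀) (hT : 0 < T) :
    ContinuousOn (fun t ↦ log (t / c)) (Set.uIcc t₀ T) := fun _ ht ↦
  (hasDerivAt_log_div hc (pos_of_mem_uIcc ht₀ hT ht).ne').continuousAt.continuousWithinAt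

lemma intervalIntegrable_log_div_div (hc : c ≠ 0) (ht₀ : 0 < t₀) (hT : 0 < T) :
    IntervalIntegrable (fun t ↦ log (t / c) / t) volume t₀ T :=
  ((continuousOn_log_div hc ht₀ hT).div continuousOn_id
    fun _ ht ↦ (pos_of_mem_uIcc ht₀ hT ht).ne').intervalIntegrable

lemma intervalIntegrable_excess_mul_log (hc : c ≠ 0) (ht₀ : 0 < t₀) (hT : 0 < T) :
    IntervalIntegrable (fun t ↦ excess (t / T) * log (t / c)) volume t₀ T :=
  ((continuous_excess.comp (continuous_id.div_const T)).continuousOn.mul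
    (continuousOn_log_div hc ht₀ hT)).intervalIntegrable

lemma integral_log_div_div (hc : c ≠ 0) (ht₀ : 0 < t₀) (hT : 0 < T) :
    ∫ t in t₀..T, log (t / c) / t = (log (T / c) ^ 2 - log (t₀ / c) ^ 2) / 2 := by
  rw [sub_div]
  refine intervalIntegral.integral_eq_sub_of_hasDerivAt (f := fun t ↦ log (t / c) ^ 2 / 2)
    (fun t ht ↦ ?_) (intervalIntegrable_log_div_div hc ht₀ hT)
  have ht_pos := pos_of_mem_uIcc ht₀ hT ht
  refine (((hasDerivAt_log_div hc ht_pos.ne').fun_pow 2).div_const 2).congr_deriv ?_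
  norm_num
  field_simp

lemma integral_excess_div (hT : T ≠ 0) :
    ∫ t in t₀..T, excess (t / T) = T * (excessPrimitive 1 - excessPrimitive (t₀ / T)) := by
  rw [intervalIntegral.integral_comp_div (fun u ↦ excess u) hT, div_self hT, smul_eq_mul,
    intervalIntegral.integral_eq_sub_of_hasDerivAt (fun u _ ↦ hasDerivAt_excessPrimitive u)
      (continuous_excess.intervalIntegrable _ _)]

lemma integral_excess_mul_log (hc : c ≠ 0) (ht₀ : 0 < t₀) (hT : 0 < T) :
    ∫ t in t₀..T, excess (t / T) * log (t / c)
      = T * (excessPrimitive 1 * log (T / c) - excessLogPrimitive 1)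
        - T * (excessPrimitive (t₀ / T) * log (t₀ / c) - excessLogPrimitive (t₀ / T)) := by
  rw [← div_self hT.ne']
  refine intervalIntegral.integral_eq_sub_of_hasDerivAt
    (f := fun t ↦ T * (excessPrimitive (t / T) * log (t / c) - excessLogPrimitive (t / T)))
    (fun t ht ↦ ?_) (intervalIntegrable_excess_mul_log hc ht₀ hT)
  have ht_pos := pos_of_mem_uIcc ht₀ hT ht
  have hscale : HasDerivAt (fun s ↦ s / T) (1 / T) t := (hasDerivAt_id' t).div_const T
  have hprim := (hasDerivAt_excessPrimitive (t / T)).comp t hscale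
  have hlogPrim := (hasDerivAt_excessLogPrimitive (div_pos ht_pos hT).ne').comp t hscale
  refine (((hprim.mul (hasDerivAt_log_div hc ht_pos.ne')).sub hlogPrim).const_mul T).congr_deriv ?_
  simp only [Function.comp_apply]
  field_simp
  ring

lemma intervalIntegral_mul_le_of_monotoneOn {f g : ℝ → ℝ} {a b m : ℝ} (hm : m ∈ Set.Icc a b)
    (hf : IntervalIntegrable f volume a b)
    (hfg : IntervalIntegrable (fun t ↦ f t * g t) volume a b)
    (hf_nonneg : ∀ t ∈ Set.Icc a b, t < m → 0 ≤ f t)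
    (hf_nonpos : ∀ t ∈ Set.Icc a b, m < t → f t ≤ 0) (hg : MonotoneOn g (Set.Icc a b)) :
    ∫ t in a..b, f t * g t ≤ (∫ t in a..b, f t) * g m := by
  rw [← intervalIntegral.integral_mul_const]
  refine intervalIntegral.integral_mono_on (hm.1.trans hm.2) hfg (hf.mul_const _) fun t ht ↦ ?_
  rcases lt_trichotomy t m with hlt | rfl | hgt
  · exact mul_le_mul_of_nonneg_left (hg ht hm hlt.le) (hf_nonneg t ht hlt)
  · rfl
  · exact mul_le_mul_of_nonpos_left (hg hm ht hgt.le) (hf_nonpos t ht hgt)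

lemma integral_excess_mul_log_nonpos (hc : 0 < c) (hct₀ : c ≤ t₀) (htT : t₀ ≤ T) :
    ∫ t in t₀..T, excess (t / T) * log (t / c) ≤ 0 := by
  have ht₀ : 0 < t₀ := hc.trans_le hct₀
  have hT : 0 < T := ht₀.trans_le htT
  have hexcess : IntervalIntegrable (fun t ↦ excess (t / T)) volume t₀ T :=
    (continuous_excess.comp (continuous_id.div_const T)).intervalIntegrable _ _
  have hmono : MonotoneOn (fun t ↦ log (t / c)) (Set.Icc t₀ T) := fun s hs t _ hst ↦
    log_le_log (div_pos (ht₀.trans_le hs.1) hc) (by gcongr)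
  have hlog : 0 ≤ log (max t₀ (2 / 5 * T) / c) :=
    log_nonneg ((one_le_div hc).mpr (hct₀.trans (le_max_left _ _)))
  have hintegral : ∫ t in t₀..T, excess (t / T) ≤ 0 := by
    rw [integral_excess_div hT.ne']
    exact mul_nonpos_of_nonneg_of_nonpos hT.le
      (sub_nonpos.mpr (excessPrimitive_one_le (by positivity) ((div_le_one hT).mpr htT)))
  refine (intervalIntegral_mul_le_of_monotoneOn (m := max t₀ (2 / 5 * T))
    ⟨le_max_left _ _, max_le htT (by linarith)⟩ hexcess
    (intervalIntegrable_excess_mul_log hc.ne' ht₀ hT) (fun t ht htm ↦ ?_) (fun t _ hmt ↦ ?_)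
    hmono).trans (mul_nonpos_of_nonpos_of_nonneg hintegral hlog)
  · exact excess_nonneg (div_nonneg (ht₀.le.trans ht.1) hT.le)
      ((div_le_iff₀ hT).mpr ((lt_max_iff.mp htm).resolve_left ht.1.not_gt).le)
  · exact excess_nonpos ((le_div_iff₀ hT).mpr ((le_max_right _ _).trans hmt.le))

lemma integral_excess_mul_log_le_Cconst (hc : 0 < c) (hct₀ : c * exp 1 ≤ t₀) (htT : 3 * t₀ ≤ T) :
    ∫ t in t₀..T, excess (t / T) * log (t / c)
      ≤ T * (Cconst 2 - Cconst 1 * log (exp 1 * T / c)) := by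
  have ht₀ : 0 < t₀ := lt_of_lt_of_le (by positivity) hct₀
  have hT : 0 < T := by linarith
  have hlogT : log (exp 1 * T / c) = 1 + log (T / c) := by
    rw [mul_div_assoc, log_mul (exp_pos 1).ne' (by positivity), log_exp]
  have hlogt₀ : 1 ≤ log (t₀ / c) := by
    rwa [le_log_iff_exp_le (by positivity), le_div_iff₀ hc, mul_comm]
  have hlog_le : log (t₀ / c) ≤ log (T / c) := by
    gcongr
    linarith
  have hC₁ : Cconst 1 * (1 + log (T / c)) ≤ 7 / 36 * (1 + log (T / c)) :=
    mul_le_mul_of_nonneg_right Cconst_one_le (by linarith)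
  rw [integral_excess_mul_log hc.ne' ht₀ hT, ← mul_sub, hlogT]
  refine mul_le_mul_of_nonneg_left ?_ hT.le
  have hu₀ : 0 ≤ t₀ / T := by positivity
  have hu₁ : t₀ / T ≤ 1 / 3 := by rw [div_le_iff₀ hT]; linarith
  have hprim : excessPrimitive (t₀ / T) ≤ excessPrimitive (t₀ / T) * log (t₀ / c) :=
    le_mul_of_one_le_right (excessPrimitive_nonneg hu₀ (by linarith)) hlogt₀
  have hdiff := excessLogPrimitive_sub_excessPrimitive_le hu₀ hu₁
  have hone : excessPrimitive 1 = -7 / 36 ∧ excessLogPrimitive 1 = 25 / 216 := by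
    norm_num [excessPrimitive, excessLogPrimitive]
  rw [hone.1, hone.2]
  linarith [le_Cconst_two]

lemma pi_mul_integral_kernelNorm_mul_log_le (hc : 0 < c) (hct₀ : c ≤ t₀) (htT : t₀ ≤ T) :
    π * ∫ t in Set.Icc t₀ T, kernelNorm (t / T) * log (t / c)
      ≤ T * (∫ t in t₀..T, log (t / c) / t) + ∫ t in t₀..T, excess (t / T) * log (t / c) := by
  have ht₀ : 0 < t₀ := hc.trans_le hct₀
  have hT : 0 < T := ht₀.trans_le htT
  have hmain := intervalIntegrable_log_div_div hc.ne' ht₀ hT |>.const_mul T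
  have hexcess := intervalIntegrable_excess_mul_log hc.ne' ht₀ hT
  have hlog : ∀ t ∈ Set.Ioo t₀ T, 0 ≤ log (t / c) := fun t ht ↦
    log_nonneg ((one_le_div hc).mpr (hct₀.trans ht.1.le))
  rw [← integral_const_mul, ← intervalIntegral.integral_const_mul,
    ← intervalIntegral.integral_add hmain hexcess, intervalIntegral.integral_of_le htT,
    -- The bound on `kernelNorm` fails at `t = T`, where `cot 0 = 0` by convention.
    integral_Icc_eq_integral_Ioo, integral_Ioc_eq_integral_Ioo]
  refine integral_mono_of_nonneg ?_ ((hmain.add hexcess).1.mono_set Set.Ioo_subset_Ioc_self) ?_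
  · filter_upwards [ae_restrict_mem measurableSet_Ioo] with t ht
    exact mul_nonneg pi_pos.le (mul_nonneg (sqrt_nonneg _) (hlog t ht))
  · filter_upwards [ae_restrict_mem measurableSet_Ioo] with t ht
    have ht_pos : 0 < t := ht₀.trans ht.1
    have hkernel := pi_mul_kernelNorm_le (div_pos ht_pos hT) ((div_lt_one hT).mpr ht.2)
    calc π * (kernelNorm (t / T) * log (t / c))
        = π * kernelNorm (t / T) * log (t / c) := by ring
      _ ≤ (1 / (t / T) + excess (t / T)) * log (t / c) :=
        mul_le_mul_of_nonneg_right hkernel (hlog t ht)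
      _ = T * (log (t / c) / t) + excess (t / T) * log (t / c) := by field_simp

lemma two_pi_div_mul_integral_kernelNorm_le (hc : 0 < c) (hct₀ : c ≤ t₀) (htT : t₀ ≤ T) :
    2 * π / T * ∫ t in Set.Icc t₀ T, kernelNorm (t / T) * log (t / c)
      ≤ log (T / c) ^ 2 - log (t₀ / c) ^ 2
        + 2 / T * ∫ t in t₀..T, excess (t / T) * log (t / c) := by
  have ht₀ : 0 < t₀ := hc.trans_le hct₀
  have hT : 0 < T := ht₀.trans_le htT
  calc 2 * π / T * ∫ t in Set.Icc t₀ T, kernelNorm (t / T) * log (t / c)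
      = 2 / T * (π * ∫ t in Set.Icc t₀ T, kernelNorm (t / T) * log (t / c)) := by ring
    _ ≤ 2 / T * (T * (∫ t in t₀..T, log (t / c) / t)
          + ∫ t in t₀..T, excess (t / T) * log (t / c)) := by
      gcongr
      exact pi_mul_integral_kernelNorm_mul_log_le hc hct₀ htT
    _ = log (T / c) ^ 2 - log (t₀ / c) ^ 2
          + 2 / T * ∫ t in t₀..T, excess (t / T) * log (t / c) := by
      rw [integral_log_div_div hc.ne' ht₀ hT]
      field_simp

end Integrals

theorem stmt_11 (t₀ T : ℝ) (h1 : 2 * π ≤ t₀) (h2 : t₀ ≤ T) :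
    (2 * π / T * ∫ t in Set.Icc t₀ T,
        Real.sqrt (Fcot (t / T) ^ 2 + (1 - t / T) ^ 2) * Real.log (t / (2 * π))
      ≤ Real.log (T / (2 * π)) ^ 2 - Real.log (t₀ / (2 * π)) ^ 2)
    ∧
    (2 * π * Real.exp 1 ≤ t₀ → 3 * t₀ ≤ T →
      2 * π / T * ∫ t in Set.Icc t₀ T,
          Real.sqrt (Fcot (t / T) ^ 2 + (1 - t / T) ^ 2) * Real.log (t / (2 * π))
        ≤ Real.log (T / (2 * π)) ^ 2 - Real.log (t₀ / (2 * π)) ^ 2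
          - 2 * Cconst 1 * Real.log (Real.exp 1 * T / (2 * π)) + 2 * Cconst 2) := by
  have hc : 0 < 2 * π := by positivity
  have hT : 0 < T := by linarith
  have hkernel := two_pi_div_mul_integral_kernelNorm_le hc h1 h2
  refine ⟨hkernel.trans ?_, fun h3 h4 ↦ hkernel.trans ?_⟩
  · have hexcess := integral_excess_mul_log_nonpos hc h1 h2
    have := mul_nonpos_of_nonneg_of_nonpos (show 0 ≤ 2 / T by positivity) hexcess
    linarith
  · have hexcess := integral_excess_mul_log_le_Cconst hc h3 h4
    have hscaled := mul_le_mul_of_nonneg_left hexcess (show 0 ≤ 2 / T by positivity)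
    rw [← mul_assoc, div_mul_cancel₀ 2 hT.ne'] at hscaled
    linarith
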